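/- arXiv:2502.03348 — 2 statements merged into one kernel-verified Lean document; each statement's English description precedes it below -/
import Mathlib

section
/- Let m be even and u = (x_1, x_2, x_3) in Z_m^3 with x_1+x_2+x_3 ≡ 0 mod m and not all x_i equal. Then either Per(u) = 6, or Per(u) = 3 and each x_i lies in {0, m/2}. -/
def ducci {m : ℕ} (u : Fin 3 → ZMod m) : Fin 3 → ZMod m :=
  fun i => u i + u (i + 1)

theorem half_aux (m : ℕ) (hm : Even m) (a : ZMod m) (h : a + a = 0) :
    a = 0 ∨ a = ((m / 2 : ℕ) : ZMod m) := by
  obtain ⟨k, rfl⟩ := hm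
  have hk : (k + k) / 2 = k := by omega
  rw [hk]
  obtain ⟨z, rfl⟩ := ZMod.intCast_surjective a
  have h2 : ((z + z : ℤ) : ZMod (k + k)) = 0 := by push_cast; exact h
  rw [ZMod.intCast_zmod_eq_zero_iff_dvd] at h2
  obtain ⟨t, ht⟩ := h2
  have hz : z = k * t := by
    push_cast at ht
    linarith
  have hkk : (k : ZMod (k + k)) + k = 0 := by
    have := ZMod.natCast_self (k + k)
    push_cast at this
    exact this
  rcases Int.even_or_odd' t with ⟨s, rfl | rfl⟩
  · left
    rw [hz]; push_cast
    linear_combination (s : ZMod (k + k)) * hkk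
  · right
    rw [hz]; push_cast
    linear_combination (s : ZMod (k + k)) * hkk

theorem ducci_period_of_even (m : ℕ) (hm : Even m) (u : Fin 3 → ZMod m)
    (hsum : u 0 + u 1 + u 2 = 0)
    (hne : ¬ (u 0 = u 1 ∧ u 1 = u 2)) :
    sInf {β : ℕ | 0 < β ∧ ducci^[β] u = u} = 6 ∨
    (sInf {β : ℕ | 0 < β ∧ ducci^[β] u = u} = 3 ∧
      ∀ i, u i = 0 ∨ u i = ((m / 2 : ℕ) : ZMod m)) := by
  have e3 : ∀ v : Fin 3 → ZMod m, ducci v = ![v 0 + v 1, v 1 + v 2, v 2 + v 0] := by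
    intro v; ext i; fin_cases i <;> rfl
  have d2 : ducci^[2] u = ![u 1, u 2, u 0] := by
    simp only [Function.iterate_succ, Function.iterate_zero, Function.comp, id, e3]
    ext i; fin_cases i <;> simp <;> linear_combination hsum
  have d3 : ducci^[3] u = -u := by
    rw [Function.iterate_succ_apply', d2, e3]
    ext i; fin_cases i <;> simp <;> linear_combination hsum
  have d6 : ducci^[6] u = u := by
    rw [show 6 = 3 + 3 from rfl, Function.iterate_add_apply, d3]
    have hn : ∀ v : Fin 3 → ZMod m, ducci (-v) = - ducci v := by
      intro v; ext i; simp [ducci]; ring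
    have : ducci^[3] (-u) = - ducci^[3] u := by
      simp only [Function.iterate_succ, Function.iterate_zero, Function.comp, id, hn]
    rw [this, d3, neg_neg]
  have n2 : ducci^[2] u ≠ u := by
    intro h
    rw [d2] at h
    exact hne ⟨(congrFun h 0).symm, (congrFun h 1).symm⟩
  have n1 : ducci u ≠ u := by
    intro h
    exact n2 (by simp [Function.iterate_succ, h])
  have n4 : ducci^[4] u ≠ u := by
    intro h
    apply n2
    have : ducci^[2] (ducci^[4] u) = u := by rw [← Function.iterate_add_apply]; exact d6
    rwa [h] at this
  have n5 : ducci^[5] u ≠ u := by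
    intro h
    apply n1
    have : ducci (ducci^[5] u) = u := by rw [← Function.iterate_succ_apply' ducci 5 u]; exact d6
    rwa [h] at this
  have hmem := Nat.sInf_mem (s := {β : ℕ | 0 < β ∧ ducci^[β] u = u}) ⟨6, by norm_num, d6⟩
  have hle := Nat.sInf_le (s := {β : ℕ | 0 < β ∧ ducci^[β] u = u}) (m := 6) ⟨by norm_num, d6⟩
  generalize sInf {β : ℕ | 0 < β ∧ ducci^[β] u = u} = n at *
  obtain ⟨h0, h1⟩ := hmem
  interval_cases n
  · exact absurd h1 n1
  · exact absurd h1 n2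
  · right
    refine ⟨rfl, fun i => half_aux m hm _ ?_⟩
    rw [d3] at h1
    have := congrFun h1 i
    simp only [Pi.neg_apply] at this
    linear_combination -this
  · exact absurd h1 n4
  · exact absurd h1 n5
  · left; rfl
end

section
/- With a_r, b_r, c_r the integer Ducci coefficients for n = 3 (a_0 = 1, b_0 = c_0 = 0, a_{r+1} = a_r + c_r, b_{r+1} = b_r + a_r, c_{r+1} = c_r + b_r), the following hold: if r ≡ 0 mod 6 then a_r = b_r + 1 = c_r + 1; if r ≡ 1 mod 6 then c_r = a_r − 1 = b_r − 1; if r ≡ 2 mod 6 then b_r = a_r + 1 = c_r + 1; if r ≡ 3 mod 6 then a_r = b_r − 1 = c_r − 1; if r ≡ 4 mod 6 then c_r = a_r + 1 = b_r + 1; if r ≡ 5 mod 6 then b_r = a_r − 1 = c_r − 1. -/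
theorem ducci_coeff_relations_n3 (a b c : ℕ → ℤ)
    (ha0 : a 0 = 1) (hb0 : b 0 = 0) (hc0 : c 0 = 0)
    (ha : ∀ r, a (r + 1) = a r + c r)
    (hb : ∀ r, b (r + 1) = b r + a r)
    (hc : ∀ r, c (r + 1) = c r + b r) (r : ℕ) :
    (r % 6 = 0 → a r = b r + 1 ∧ a r = c r + 1) ∧
    (r % 6 = 1 → c r = a r - 1 ∧ c r = b r - 1) ∧
    (r % 6 = 2 → b r = a r + 1 ∧ b r = c r + 1) ∧
    (r % 6 = 3 → a r = b r - 1 ∧ a r = c r - 1) ∧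
    (r % 6 = 4 → c r = a r + 1 ∧ c r = b r + 1) ∧
    (r % 6 = 5 → b r = a r - 1 ∧ b r = c r - 1) := by
  induction r with
  | zero => simp [ha0, hb0, hc0]
  | succ k ih =>
    have h1 := ha k
    have h2 := hb k
    have h3 := hc k
    obtain ⟨i0, i1, i2, i3, i4, i5⟩ := ih
    refine ⟨fun h => ?_, fun h => ?_, fun h => ?_, fun h => ?_, fun h => ?_, fun h => ?_⟩
    · have := i5 (by omega)
      omega
    · have := i0 (by omega)
      omega
    · have := i1 (by omega)
      omega
    · have := i2 (by omega)
      omega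
    · have := i3 (by omega)
      omega
    · have := i4 (by omega)
      omega
end
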